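/- Let (V, c) be a finite-dimensional braided vector space that is left triangular with respect to the totally ordered basis X, with diagonal coefficients γ_{x,y}, and let r be an admissible endomorphism of V⊗V that is moreover diagonal with respect to X (i.e., r(x⊗y) ∈ k·(y⊗x) for all x, y ∈ X). Then for all words u, v in letters from X: c_{l(u),l(v)}([u]_r ⊗ [v]_r) − γ_{u,v}·([v]_r ⊗ [u]_r) lies in k{z : z a word with l(z) = l(v) and z > v lexicographically} ⊗ V^{⊗l(u)}. -/

import Mathlib

/-!
We identify the finite-dimensional vector space `V` with basis `X` with the free
`k`-module on `X`, and the tensor power `V^{⊗n}` with the free `k`-module on the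
words of length `n` in letters from `X`; correspondingly `V^{⊗n} ⊗ V^{⊗m}` is the
free `k`-module on pairs of words.  A linear endomorphism `c` of `V ⊗ V` is encoded
by its matrix `c : X → X → ((X × X) →₀ k)`, via `c(x ⊗ y) = Σ_{(z,w)} c x y (z,w) • z ⊗ w`.
-/

variable {k : Type*} [Field k] {X : Type*} [Fintype X] [LinearOrder X]

/-- The maps `c_{1,m} : V ⊗ V^{⊗m} → V^{⊗m} ⊗ V`, defined on basis vectors by
`c_{1,0} = id` and `c_{1,m+1} = (id_V ⊗ c_{1,m}) ∘ (c ⊗ id_{V^{⊗m}})`. -/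
noncomputable def braidOne (c : X → X → ((X × X) →₀ k)) :
    X → List X → ((List X × List X) →₀ k)
  | x, [] => Finsupp.single ([], [x]) 1
  | x, y :: v =>
      (c x y).sum fun p a =>
        a • Finsupp.mapDomain (fun q : List X × List X => (p.1 :: q.1, q.2))
          (braidOne c p.2 v)

/-- Auxiliary version of `c_{n,m}` where the first word is given reversed:
`c_{0,m} = id` and `c_{n+1,m} = (c_{n,m} ⊗ id_V) ∘ (id_{V^{⊗n}} ⊗ c_{1,m})`. -/
noncomputable def braidRev (c : X → X → ((X × X) →₀ k)) :
    List X → List X → ((List X × List X) →₀ k)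
  | [], v => Finsupp.single (v, []) 1
  | x :: urev, v =>
      (braidOne c x v).sum fun p a =>
        a • Finsupp.mapDomain (fun q : List X × List X => (q.1, q.2 ++ p.2))
          (braidRev c urev p.1)

/-- The braiding maps `c_{n,m} : V^{⊗n} ⊗ V^{⊗m} → V^{⊗m} ⊗ V^{⊗n}` on basis vectors:
`braidWords c u v` is `c_{l(u),l(v)}(u ⊗ v)`. -/
noncomputable def braidWords (c : X → X → ((X × X) →₀ k)) (u v : List X) :
    (List X × List X) →₀ k :=
  braidRev c u.reverse v

/-- `c` is left triangular with respect to the ordered basis `X`: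
`c(x ⊗ y) = γ_{x,y} • y ⊗ x + Σ_{z > y} z ⊗ v_{x,y,z}`, i.e. the coefficient of
`c(x ⊗ y)` at `z ⊗ w` vanishes unless `(z, w) = (y, x)` or `z > y`. -/
def LeftTriangularMat (c : X → X → ((X × X) →₀ k)) : Prop :=
  ∀ (x y : X) (zw : X × X), c x y zw ≠ 0 → (zw.1 = y ∧ zw.2 = x) ∨ y < zw.1

/-- `c ⊗ id` acting on `V ⊗ V ⊗ V` (matrix form). -/
noncomputable def act12 (c : X → X → ((X × X) →₀ k)) (f : (X × X × X) →₀ k) :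
    (X × X × X) →₀ k :=
  f.sum fun t a => a • ((c t.1 t.2.1).sum fun p b => Finsupp.single (p.1, p.2, t.2.2) b)

/-- `id ⊗ c` acting on `V ⊗ V ⊗ V` (matrix form). -/
noncomputable def act23 (c : X → X → ((X × X) →₀ k)) (f : (X × X × X) →₀ k) :
    (X × X × X) →₀ k :=
  f.sum fun t a => a • ((c t.2.1 t.2.2).sum fun p b => Finsupp.single (t.1, p.1, p.2) b)

/-- `c` satisfies the braid equation
`(c ⊗ id)(id ⊗ c)(c ⊗ id) = (id ⊗ c)(c ⊗ id)(id ⊗ c)`. -/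
def SatisfiesBraidEq (c : X → X → ((X × X) →₀ k)) : Prop :=
  ∀ f : (X × X × X) →₀ k,
    act12 c (act23 c (act12 c f)) = act23 c (act12 c (act23 c f))

/-- The linear extension of `c` to an endomorphism of `V ⊗ V`. -/
noncomputable def extendMat (c : X → X → ((X × X) →₀ k)) (f : (X × X) →₀ k) :
    (X × X) →₀ k :=
  f.sum fun p a => a • c p.1 p.2

/-- The coefficient `γ_{u,v} = Π_{x ∈ u} Π_{y ∈ v} γ x y`. -/
def gammaWords (γ : X → X → k) (u v : List X) : k :=
  (u.map fun x => (v.map fun y => γ x y).prod).prod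

/-- A word `u` is a Lyndon word if it is nonempty and lexicographically smaller than
each of its proper nonempty suffixes. -/
def IsLyndon {X : Type*} [LinearOrder X] (u : List X) : Prop :=
  u ≠ [] ∧ ∀ v w : List X, v ≠ [] → w ≠ [] → u = v ++ w → List.Lex (· < ·) u w

/-- `ls` is a Lyndon factorization of `u`: all factors are Lyndon words, the factors are
(lexicographically) nonincreasing, and their concatenation is `u`. -/
def IsLyndonFactorization {X : Type*} [LinearOrder X] (ls : List (List X)) (u : List X) : Prop :=
  (∀ l ∈ ls, IsLyndon l) ∧ ls.Chain' (fun a b => ¬ List.Lex (· < ·) a b) ∧ ls.flatten = u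

/-- `u = v ++ w` is the Shirshov decomposition of the Lyndon word `u`:
`w` is the longest proper nonempty suffix of `u` that is a Lyndon word. -/
def ShirshovSplit {X : Type*} [LinearOrder X] (u v w : List X) : Prop :=
  v ≠ [] ∧ w ≠ [] ∧ u = v ++ w ∧ IsLyndon w ∧
    ∀ w' : List X, w' ≠ [] → IsLyndon w' →
      (∃ v' : List X, v' ≠ [] ∧ u = v' ++ w') → w'.length ≤ w.length

/-- The multiplication `V^{⊗n} ⊗ V^{⊗m} → V^{⊗(n+m)}` of the tensor algebra,
in the word model: concatenation of the two components. -/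
noncomputable def mulWords {k : Type*} [Field k] {X : Type*} :
    ((List X × List X) →₀ k) → ((List X) →₀ k) :=
  Finsupp.mapDomain fun p : List X × List X => p.1 ++ p.2

/-- The tensor product of two elements of the tensor algebra, in the word model. -/
noncomputable def tensWords {k : Type*} [Field k] {X : Type*}
    (f g : (List X) →₀ k) : (List X × List X) →₀ k :=
  f.sum fun u a => g.sum fun v b => Finsupp.single (u, v) (a * b)

/-- The linear extension of the braiding maps `c_{n,m}` to all of `T(V) ⊗ T(V)`
(applied degreewise), in the word model. -/
noncomputable def braidExt {k : Type*} [Field k] {X : Type*} [Fintype X] [LinearOrder X]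
    (c : X → X → ((X × X) →₀ k)) (f : (List X × List X) →₀ k) :
    (List X × List X) →₀ k :=
  f.sum fun p a => a • braidWords c p.1 p.2

/-- `br` is the iterated-commutator map `u ↦ [u]_r` associated to the endomorphism `r`:
it satisfies the defining recursion of `[-]_r`. -/
def IsBracketing {k : Type*} [Field k] {X : Type*} [Fintype X] [LinearOrder X]
    (r : X → X → ((X × X) →₀ k)) (br : List X → ((List X) →₀ k)) : Prop :=
  br [] = Finsupp.single [] 1 ∧
  (∀ x : X, br [x] = Finsupp.single [x] 1) ∧
  (∀ u v w : List X, IsLyndon u → ShirshovSplit u v w →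
    br u = mulWords (tensWords (br v) (br w))
      - mulWords (braidExt r (tensWords (br v) (br w)))) ∧
  (∀ (l : List X) (ls : List (List X)) (u : List X), ls ≠ [] →
    IsLyndonFactorization (l :: ls) u →
    br u = mulWords (tensWords (br l) (br ls.flatten)))

/-!
Call a rearrangement of `u` upper if it is lexicographically at least `u`.  The element `[u]_r` is a
combination of upper rearrangements of `u`: concatenation respects upper rearrangements, and in the
recursion for a Lyndon word `u = vw` a diagonal `r` only adds terms `w'v'` with `v'`, `w'` upper
rearrangements of `v`, `w`, which are above `u` because `vw < w`.  For upper rearrangements `u'` of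
`u` and `v'` of `v`, triangularity of `c` propagates letter by letter to
`c(u' ⊗ v') ≡ γ_{u',v'} • v' ⊗ u'` modulo words above `v' ≥ v`, and `γ_{u',v'} = γ_{u,v}` since
`γ` is a product over letters.  Summing over the terms of `[u]_r ⊗ [v]_r` gives the theorem.
-/

section Lex

variable {α : Type*} [LinearOrder α]

theorem append_strictMono_right (a : List α) : StrictMono (a ++ ·) :=
  fun _ _ => List.append_left_lt

theorem le_append_self_left (a b : List α) : a ≤ a ++ b :=
  not_lt.1 List.le_append_left

theorem append_lt_append_of_lt_of_length_eq {a a' : List α} (h : a < a')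
    (hlen : a.length = a'.length) (b b' : List α) : a ++ b < a' ++ b' := by
  induction h with
  | nil => simp at hlen
  | rel hxy => exact .rel hxy
  | cons _ ih => exact .cons (ih (Nat.succ.inj hlen))

theorem append_le_append_of_length_eq {a a' b b' : List α}
    (ha : a ≤ a') (hlen : a.length = a'.length) (hb : b ≤ b') : a ++ b ≤ a' ++ b' := by
  rcases ha.lt_or_eq with ha | rfl
  · exact (append_lt_append_of_lt_of_length_eq ha hlen b b').le
  · exact (append_strictMono_right a).monotone hb

theorem isPrefix_of_lt_of_lt_append {a b w : List α} (haw : a < w) (hwab : w < a ++ b) :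
    a <+: w := by
  induction haw with
  | nil => exact List.nil_prefix
  | rel hxy => exact absurd hwab (lt_asymm (List.Lex.rel hxy))
  | @cons x a w _ ih =>
    exact (List.prefix_cons_inj x).2 (ih ((append_strictMono_right [x]).lt_iff_lt.1 hwab))

end Lex

section Lyndon

variable {α : Type*} [LinearOrder α]

theorem isLyndon_singleton (x : α) : IsLyndon [x] := by
  refine ⟨List.cons_ne_nil x [], fun v w hv hw hvw => ?_⟩
  rcases List.append_eq_singleton_iff.1 hvw.symm with ⟨rfl, -⟩ | ⟨-, rfl⟩
  · exact absurd rfl hv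
  · exact absurd rfl hw

theorem finite_setOf_isSuffix {β : Type*} (u : List β) : {w | w <:+ u}.Finite := by
  simpa using u.tails.finite_toSet

/-- `w` is the lexicographically smallest nonempty suffix of `u`, which will be the last factor of
the Lyndon decomposition of `u`. -/
def IsMinSuffix (w u : List α) : Prop :=
  IsLeast {s | s ≠ [] ∧ s <:+ u} w

theorem exists_isMinSuffix {u : List α} (hu : u ≠ []) : ∃ w, IsMinSuffix w u := by
  have hfin : {s | s ≠ [] ∧ s <:+ u}.Finite :=
    (finite_setOf_isSuffix u).subset fun _ hs => hs.2
  exact Set.exists_min_image _ id hfin ⟨u, hu, List.suffix_rfl⟩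

theorem IsMinSuffix.of_isSuffix {w u u' : List α} (hw : IsMinSuffix w u) (hwu' : w <:+ u')
    (hu' : u' <:+ u) : IsMinSuffix w u' :=
  ⟨⟨hw.1.1, hwu'⟩, fun _ hs => hw.2 ⟨hs.1, hs.2.trans hu'⟩⟩

theorem IsMinSuffix.isLyndon {w u : List α} (hw : IsMinSuffix w u) : IsLyndon w := by
  refine ⟨hw.1.1, fun a b ha hb hab => ?_⟩
  have hle : w ≤ b := hw.2 ⟨hb, List.IsSuffix.trans ⟨a, hab.symm⟩ hw.1.2⟩
  exact hle.lt_of_ne fun h => ha (List.append_left_eq_self.1 (hab.symm.trans h))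

theorem IsMinSuffix.le_of_append {l w : List α} (hw : IsMinSuffix w (l ++ w)) (hl : l ≠ []) :
    w ≤ l := by
  by_contra! hlw
  have hlt : w < l ++ w :=
    (hw.2 ⟨List.append_ne_nil_of_left_ne_nil hl w, List.suffix_rfl⟩).lt_of_ne fun h =>
      hl (List.append_left_eq_self.1 h.symm)
  obtain ⟨t, rfl⟩ := isPrefix_of_lt_of_lt_append hlw hlt
  have ht : t ≠ [] := by
    rintro rfl
    simp at hlw
  have htw : t < l ++ t := (append_strictMono_right l).lt_iff_lt.1 hlt
  exact htw.not_ge (hw.2 ⟨ht, (List.suffix_append l t).trans (List.suffix_append l _)⟩)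

theorem IsLyndonFactorization.concat {ls : List (List α)} {u w : List α}
    (hls : IsLyndonFactorization ls u) (hw : IsMinSuffix w (u ++ w)) :
    IsLyndonFactorization (ls ++ [w]) (u ++ w) := by
  obtain ⟨hlyndon, hchain, rfl⟩ := hls
  refine ⟨?_, List.isChain_append.2 ⟨hchain, List.isChain_singleton w, ?_⟩, by simp⟩
  · simpa [or_imp, forall_and] using ⟨hlyndon, hw.isLyndon⟩
  · intro l hl w' hw'
    obtain rfl : w = w' := by simpa using hw'
    obtain ⟨ls', rfl⟩ := List.getLast?_eq_some_iff.1 hl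
    have hlw : IsMinSuffix w (l ++ w) :=
      hw.of_isSuffix (List.suffix_append l w) ⟨ls'.flatten, by simp⟩
    exact (hlw.le_of_append (hlyndon l (by simp)).1).not_gt

theorem exists_isLyndonFactorization (u : List α) : ∃ ls, IsLyndonFactorization ls u := by
  induction hn : u.length using Nat.strong_induction_on generalizing u with
  | _ n ih =>
  subst hn
  rcases eq_or_ne u [] with rfl | hu
  · exact ⟨[], by simp, List.isChain_nil, rfl⟩
  · obtain ⟨w, hw⟩ := exists_isMinSuffix hu
    obtain ⟨u', rfl⟩ := hw.1.2
    have hlen : u'.length < (u' ++ w).length := by simpa [List.length_pos_iff] using hw.1.1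
    obtain ⟨ls, hls⟩ := ih _ hlen u' rfl
    exact ⟨ls ++ [w], hls.concat hw⟩

theorem exists_shirshovSplit {u : List α} (hu : 2 ≤ u.length) : ∃ v w, ShirshovSplit u v w := by
  let S := {w | IsLyndon w ∧ ∃ v, v ≠ [] ∧ u = v ++ w}
  have hfin : S.Finite := (finite_setOf_isSuffix u).subset fun w hw =>
    let ⟨_, v, _, hvw⟩ := hw
    ⟨v, hvw.symm⟩
  have hnonempty : S.Nonempty := by
    obtain ⟨v, x, rfl⟩ := (List.eq_nil_or_concat u).resolve_left (by rintro rfl; simp at hu)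
    refine ⟨[x], isLyndon_singleton x, v, ?_, List.concat_eq_append⟩
    rintro rfl
    simp at hu
  obtain ⟨w, ⟨hw, v, hv, hvw⟩, hmax⟩ := Set.exists_max_image S List.length hfin hnonempty
  exact ⟨v, w, hv, hw.1, hvw, hw, fun w' _ hw' hsplit => hmax w' ⟨hw', hsplit⟩⟩

@[elab_as_elim]
theorem lyndon_induction {P : List α → Prop} (nil : P []) (singleton : ∀ x, P [x])
    (lyndon : ∀ v w, IsLyndon (v ++ w) → ShirshovSplit (v ++ w) v w → P v → P w → P (v ++ w))
    (factor : ∀ l ls, ls ≠ [] → IsLyndonFactorization (l :: ls) (l ++ ls.flatten) →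
      P l → P ls.flatten → P (l ++ ls.flatten)) (u : List α) : P u := by
  induction hn : u.length using Nat.strong_induction_on generalizing u with
  | _ n ih =>
  subst hn
  have ih_append : ∀ {v w}, v ≠ [] → w ≠ [] → u = v ++ w → P v ∧ P w := by
    rintro v w hv hw rfl
    rw [← List.length_pos_iff] at hv hw
    exact ⟨ih _ (by simpa using hw) v rfl, ih _ (by simpa using hv) w rfl⟩
  obtain ⟨ls, hls⟩ := exists_isLyndonFactorization u
  match ls, hls with
  | [], ⟨_, _, hflat⟩ => exact hflat ▸ nil
  | [l], ⟨hlyndon, _, hflat⟩ =>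
    obtain rfl : l = u := by simpa using hflat
    match l, hlyndon l (by simp) with
    | [], hl => exact absurd rfl hl.1
    | [x], _ => exact singleton x
    | x :: y :: l, hl =>
      obtain ⟨v, w, hsplit⟩ := exists_shirshovSplit (u := x :: y :: l) (by simp)
      have ⟨hv, hw, hvw, _⟩ := hsplit
      obtain ⟨hPv, hPw⟩ := ih_append hv hw hvw
      rw [hvw] at hl hsplit ⊢
      exact lyndon v w hl hsplit hPv hPw
  | l :: m :: ls, hls =>
    obtain rfl : l ++ (m :: ls).flatten = u := hls.2.2
    have hm : (m :: ls).flatten ≠ [] := by simp [(hls.1 m (by simp)).1]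
    obtain ⟨hPl, hPls⟩ := ih_append (hls.1 l (by simp)).1 hm rfl
    exact factor l (m :: ls) (List.cons_ne_nil m ls) hls hPl hPls

end Lyndon

section Supported

variable {R ι κ M : Type*} [Ring R] [AddCommGroup M] [Module R M]
  {S : Set ι} {T : Set κ} {N : Submodule R M} {f g : ι →₀ R} {F G : ι → M}

theorem linearCombination_mem_of_mem_supported (hf : f ∈ Finsupp.supported R R S)
    (hF : ∀ i ∈ S, F i ∈ N) : Finsupp.linearCombination R F f ∈ N :=
  N.sum_mem fun i hi => N.smul_mem _ (hF i (hf hi))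

theorem linearCombination_smodEq_of_mem_supported (hf : f ∈ Finsupp.supported R R S)
    (hFG : ∀ i ∈ S, F i ≡ G i [SMOD N]) :
    Finsupp.linearCombination R F f ≡ Finsupp.linearCombination R G f [SMOD N] :=
  SModEq.sum fun i hi => (hFG i (hf hi)).smul _

theorem linearCombination_smodEq_of_smodEq (hfg : f ≡ g [SMOD Finsupp.supported R R S])
    (hF : ∀ i ∈ S, F i ∈ N) :
    Finsupp.linearCombination R F f ≡ Finsupp.linearCombination R F g [SMOD N] := by
  rw [SModEq.sub_mem] at hfg ⊢
  simpa only [map_sub] using linearCombination_mem_of_mem_supported hfg hF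

theorem mapDomain_mem_supported {φ : ι → κ} (hf : f ∈ Finsupp.supported R R S)
    (hφ : Set.MapsTo φ S T) : f.mapDomain φ ∈ Finsupp.supported R R T :=
  Finsupp.supported_comap_lmapDomain R R φ T (Finsupp.supported_mono hφ hf)

theorem mapDomain_smodEq {φ : ι → κ} (hfg : f ≡ g [SMOD Finsupp.supported R R S])
    (hφ : Set.MapsTo φ S T) :
    f.mapDomain φ ≡ g.mapDomain φ [SMOD Finsupp.supported R R T] :=
  (hfg.map (Finsupp.lmapDomain R R φ)).mono <| Submodule.map_le_iff_le_comap.2 <|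
    (Finsupp.supported_mono hφ).trans (Finsupp.supported_comap_lmapDomain R R φ T)

end Supported

section Tensor

variable {α : Type*} {f g : List α →₀ k} {S T : Set (List α)}

theorem tensWords_mem_supported (hf : f ∈ Finsupp.supported k k S)
    (hg : g ∈ Finsupp.supported k k T) : tensWords f g ∈ Finsupp.supported k k (S ×ˢ T) :=
  Submodule.sum_mem _ fun _ hu => Submodule.sum_mem _ fun _ hv =>
    Finsupp.single_mem_supported k _ ⟨hf hu, hg hv⟩

theorem mapDomain_swap_tensWords (f g : List α →₀ k) :
    (tensWords f g).mapDomain Prod.swap = tensWords g f := by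
  unfold tensWords
  rw [Finsupp.sum_comm]
  simp only [Finsupp.sum, Finsupp.mapDomain_finsetSum, Finsupp.mapDomain_single, Prod.swap_prod_mk,
    mul_comm]

theorem gammaWords_congr_perm (γ : α → α → k) {u u' v v' : List α} (hu : u'.Perm u)
    (hv : v'.Perm v) : gammaWords γ u' v' = gammaWords γ u v := by
  simp only [gammaWords, (hv.map _).prod_eq, (hu.map _).prod_eq]

end Tensor

section Triangular

variable {α : Type*} [LinearOrder α] {c : α → α → (α × α) →₀ k} {γ : α → α → k}

/-- The pairs of words spanning the error term `k{z : l(z) = l(v), z > v} ⊗ V^{⊗n}`. -/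
def wordsAbove (v : List α) (n : ℕ) : Set (List α × List α) :=
  {p | p.1.length = v.length ∧ v < p.1 ∧ p.2.length = n}

/-- The variant of `wordsAbove` with `z ≥ v`; these pairs span a space containing `c(u ⊗ v)` for
triangular `c` and `l(u) = n`. -/
def wordsAtLeast (v : List α) (n : ℕ) : Set (List α × List α) :=
  {p | p.1.length = v.length ∧ v ≤ p.1 ∧ p.2.length = n}

theorem span_single_wordsAbove (v : List α) (n : ℕ) :
    Submodule.span k {f : (List α × List α) →₀ k |
        ∃ z w : List α, z.length = v.length ∧ List.Lex (· < ·) v z ∧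
          w.length = n ∧ f = Finsupp.single (z, w) 1} =
      Finsupp.supported k k (wordsAbove v n) := by
  rw [Finsupp.supported_eq_span_single]
  congr 1
  ext f
  constructor
  · rintro ⟨z, w, hz, hvz, hw, rfl⟩
    exact ⟨(z, w), ⟨hz, hvz, hw⟩, rfl⟩
  · rintro ⟨⟨z, w⟩, ⟨hz, hvz, hw⟩, rfl⟩
    exact ⟨z, w, hz, hvz, hw, rfl⟩

theorem mem_supported_wordsAtLeast {f : (List α × List α) →₀ k} {a : k} {v w : List α} {n : ℕ}
    (hf : f ≡ a • Finsupp.single (v, w) 1 [SMOD Finsupp.supported k k (wordsAbove v n)])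
    (hw : w.length = n) : f ∈ Finsupp.supported k k (wordsAtLeast v n) := by
  have hsub : wordsAbove v n ⊆ wordsAtLeast v n := fun p hp => ⟨hp.1, hp.2.1.le, hp.2.2⟩
  have hlead : Finsupp.single (v, w) 1 ∈ Finsupp.supported k k (wordsAtLeast v n) :=
    Finsupp.single_mem_supported k 1 ⟨rfl, le_rfl, hw⟩
  rw [SModEq.sub_mem] at hf
  simpa using add_mem (Finsupp.supported_mono hsub hf) (Submodule.smul_mem _ a hlead)

theorem LeftTriangularMat.smodEq (hc : LeftTriangularMat c) (hγ : ∀ x y, γ x y = c x y (y, x))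
    (x y : α) :
    c x y ≡ γ x y • Finsupp.single (y, x) 1
      [SMOD Finsupp.supported k k {p : α × α | y < p.1}] := by
  rw [SModEq.sub_mem, Finsupp.mem_supported']
  intro p hp
  rcases eq_or_ne p (y, x) with rfl | hne
  · simp [hγ]
  · have hcp : c x y p = 0 := by
      by_contra h
      exact (hc x y p h).elim (fun h => hne (Prod.ext h.1 h.2)) hp
    simp [hcp, hne.symm]

theorem LeftTriangularMat.braidOne_smodEq (hc : LeftTriangularMat c)
    (hγ : ∀ x y, γ x y = c x y (y, x)) (x : α) (v : List α) :
    braidOne c x v ≡ (v.map (γ x)).prod • Finsupp.single (v, [x]) 1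
      [SMOD Finsupp.supported k k (wordsAbove v 1)] := by
  induction v generalizing x with
  | nil => simp [braidOne]
  | cons y v ih =>
    let F (p : α × α) := (braidOne c p.2 v).mapDomain fun q => (p.1 :: q.1, q.2)
    have hF : ∀ p ∈ {p : α × α | y < p.1},
        F p ∈ Finsupp.supported k k (wordsAbove (y :: v) 1) := fun p hp =>
      mapDomain_mem_supported (mem_supported_wordsAtLeast (ih p.2) rfl) fun q hq =>
        ⟨congrArg Nat.succ hq.1, .rel hp, hq.2.2⟩
    have hFyx : F (y, x) ≡ ((v.map (γ x)).prod • Finsupp.single (v, [x]) 1).mapDomain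
          (fun q => (y :: q.1, q.2)) [SMOD Finsupp.supported k k (wordsAbove (y :: v) 1)] :=
      mapDomain_smodEq (ih x) fun q hq => ⟨congrArg Nat.succ hq.1, .cons hq.2.1, hq.2.2⟩
    calc
      braidOne c x (y :: v) = Finsupp.linearCombination k F (c x y) := rfl
      _ ≡ Finsupp.linearCombination k F (γ x y • Finsupp.single (y, x) 1)
          [SMOD Finsupp.supported k k (wordsAbove (y :: v) 1)] :=
        linearCombination_smodEq_of_smodEq (hc.smodEq hγ x y) hF
      _ = γ x y • F (y, x) := by simp
      _ ≡ _ [SMOD _] := hFyx.smul _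
      _ = ((y :: v).map (γ x)).prod • Finsupp.single (y :: v, [x]) 1 := by
        simp

theorem LeftTriangularMat.braidRev_smodEq (hc : LeftTriangularMat c)
    (hγ : ∀ x y, γ x y = c x y (y, x)) (u v : List α) :
    braidRev c u v ≡ gammaWords γ u v • Finsupp.single (v, u.reverse) 1
      [SMOD Finsupp.supported k k (wordsAbove v u.length)] := by
  induction u generalizing v with
  | nil => simp [braidRev, gammaWords]
  | cons x u ih =>
    let F (p : List α × List α) := (braidRev c u p.1).mapDomain fun q => (q.1, q.2 ++ p.2)
    have hF : ∀ p ∈ wordsAbove v 1,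
        F p ∈ Finsupp.supported k k (wordsAbove v (u.length + 1)) := fun p hp =>
      mapDomain_mem_supported (mem_supported_wordsAtLeast (ih p.1) (by simp)) fun q hq =>
        ⟨hq.1.trans hp.1, hp.2.1.trans_le hq.2.1, by simp [hq.2.2, hp.2.2]⟩
    have hFvx : F (v, [x]) ≡ (gammaWords γ u v • Finsupp.single (v, u.reverse) 1).mapDomain
          (fun q => (q.1, q.2 ++ [x])) [SMOD Finsupp.supported k k (wordsAbove v (u.length + 1))] :=
      mapDomain_smodEq (ih v) fun q hq => ⟨hq.1, hq.2.1, by simp [hq.2.2]⟩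
    calc
      braidRev c (x :: u) v = Finsupp.linearCombination k F (braidOne c x v) := rfl
      _ ≡ Finsupp.linearCombination k F ((v.map (γ x)).prod • Finsupp.single (v, [x]) 1)
          [SMOD Finsupp.supported k k (wordsAbove v (u.length + 1))] :=
        linearCombination_smodEq_of_smodEq (hc.braidOne_smodEq hγ x v) hF
      _ = (v.map (γ x)).prod • F (v, [x]) := by simp
      _ ≡ _ [SMOD _] := hFvx.smul _
      _ = gammaWords γ (x :: u) v • Finsupp.single (v, (x :: u).reverse) 1 := by
        simp [gammaWords]

theorem LeftTriangularMat.braidWords_smodEq (hc : LeftTriangularMat c)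
    (hγ : ∀ x y, γ x y = c x y (y, x)) (u v : List α) :
    braidWords c u v ≡ gammaWords γ u v • Finsupp.single (v, u) 1
      [SMOD Finsupp.supported k k (wordsAbove v u.length)] := by
  simpa only [braidWords, List.reverse_reverse, List.length_reverse,
    gammaWords_congr_perm γ u.reverse_perm (List.Perm.refl v)] using
    hc.braidRev_smodEq hγ u.reverse v

end Triangular

section Diagonal

variable {α : Type*} {r : α → α → (α × α) →₀ k}

/-- `r` is diagonal with respect to the basis `α`, i.e. `r(x ⊗ y) ∈ k • y ⊗ x`. -/
def IsDiagonalMat (r : α → α → (α × α) →₀ k) : Prop :=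
  ∀ (x y : α) (zw : α × α), r x y zw ≠ 0 → zw = (y, x)

theorem IsDiagonalMat.mem_supported (hr : IsDiagonalMat r) (x y : α) :
    r x y ∈ Finsupp.supported k k {(y, x)} :=
  fun zw hzw => hr x y zw (Finsupp.mem_support_iff.1 hzw)

theorem IsDiagonalMat.braidOne_mem_supported (hr : IsDiagonalMat r) (x : α) (v : List α) :
    braidOne r x v ∈ Finsupp.supported k k {(v, [x])} := by
  induction v generalizing x with
  | nil => exact Finsupp.single_mem_supported k 1 rfl
  | cons y v ih =>
    refine linearCombination_mem_of_mem_supported (hr.mem_supported x y) ?_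
    rintro _ rfl
    exact mapDomain_mem_supported (ih x) (by simp)

theorem IsDiagonalMat.braidRev_mem_supported (hr : IsDiagonalMat r) (u v : List α) :
    braidRev r u v ∈ Finsupp.supported k k {(v, u.reverse)} := by
  induction u generalizing v with
  | nil => exact Finsupp.single_mem_supported k 1 rfl
  | cons x u ih =>
    refine linearCombination_mem_of_mem_supported (hr.braidOne_mem_supported x v) ?_
    rintro _ rfl
    exact mapDomain_mem_supported (ih v) (by simp)

theorem IsDiagonalMat.braidWords_mem_supported (hr : IsDiagonalMat r) (u v : List α) :
    braidWords r u v ∈ Finsupp.supported k k {(v, u)} := by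
  simpa only [braidWords, List.reverse_reverse] using hr.braidRev_mem_supported u.reverse v

end Diagonal

theorem IsDiagonalMat.braidExt_mem_supported {r : X → X → (X × X) →₀ k} (hr : IsDiagonalMat r)
    {f : (List X × List X) →₀ k} {S T : Set (List X)}
    (hf : f ∈ Finsupp.supported k k (S ×ˢ T)) :
    braidExt r f ∈ Finsupp.supported k k (T ×ˢ S) := by
  refine linearCombination_mem_of_mem_supported hf fun ⟨u, v⟩ ⟨hu, hv⟩ => ?_
  have hsub : {(v, u)} ⊆ T ×ˢ S := Set.singleton_subset_iff.2 ⟨hv, hu⟩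
  exact Finsupp.supported_mono hsub (hr.braidWords_mem_supported u v)

section UpperRearrangements

variable {α : Type*} [LinearOrder α] {u v w v' w' : List α}

/-- The rearrangements of `u` that are lexicographically at least `u`; they are the words that can
occur in `[u]_r` for diagonal `r`. -/
def upperRearrangements (u : List α) : Set (List α) :=
  {u' | u'.Perm u ∧ u ≤ u'}

theorem self_mem_upperRearrangements (u : List α) : u ∈ upperRearrangements u :=
  ⟨.refl u, le_rfl⟩

theorem append_mem_upperRearrangements (hv : v' ∈ upperRearrangements v)
    (hw : w' ∈ upperRearrangements w) : v' ++ w' ∈ upperRearrangements (v ++ w) :=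
  ⟨hv.1.append hw.1, append_le_append_of_length_eq hv.2 hv.1.length_eq.symm hw.2⟩

theorem append_swap_mem_upperRearrangements (hvw : v ++ w ≤ w) (hv : v' ∈ upperRearrangements v)
    (hw : w' ∈ upperRearrangements w) : w' ++ v' ∈ upperRearrangements (v ++ w) :=
  ⟨(hw.1.append hv.1).trans List.perm_append_comm,
    hvw.trans (hw.2.trans (le_append_self_left w' v'))⟩

end UpperRearrangements

theorem IsBracketing.mem_supported {r : X → X → (X × X) →₀ k} {br : List X → List X →₀ k}
    (hbr : IsBracketing r br) (hr : IsDiagonalMat r) (u : List X) :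
    br u ∈ Finsupp.supported k k (upperRearrangements u) := by
  obtain ⟨hnil, hsingleton, hlyndon, hfactor⟩ := hbr
  induction u using lyndon_induction with
  | nil => exact hnil ▸ Finsupp.single_mem_supported k 1 (self_mem_upperRearrangements [])
  | singleton x =>
    exact hsingleton x ▸ Finsupp.single_mem_supported k 1 (self_mem_upperRearrangements [x])
  | lyndon v w hvw hsplit ihv ihw =>
    have hlt : v ++ w < w := hvw.2 v w hsplit.1 hsplit.2.1 rfl
    have htens := tensWords_mem_supported ihv ihw
    rw [hlyndon _ v w hvw hsplit]
    exact sub_mem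
      (mapDomain_mem_supported htens fun p hp => append_mem_upperRearrangements hp.1 hp.2)
      (mapDomain_mem_supported (hr.braidExt_mem_supported htens) fun p hp =>
        append_swap_mem_upperRearrangements hlt.le hp.2 hp.1)
  | factor l ls hls hfact ihl ihls =>
    rw [hfactor l ls _ hls hfact]
    exact mapDomain_mem_supported (tensWords_mem_supported ihl ihls) fun p hp =>
      append_mem_upperRearrangements hp.1 hp.2

theorem LeftTriangularMat.braidExt_smodEq {c : X → X → (X × X) →₀ k} {γ : X → X → k}
    (hc : LeftTriangularMat c) (hγ : ∀ x y, γ x y = c x y (y, x)) {u v : List X}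
    {f : (List X × List X) →₀ k}
    (hf : f ∈ Finsupp.supported k k (upperRearrangements u ×ˢ upperRearrangements v)) :
    braidExt c f ≡ gammaWords γ u v • f.mapDomain Prod.swap
      [SMOD Finsupp.supported k k (wordsAbove v u.length)] := by
  have hwords : ∀ p ∈ upperRearrangements u ×ˢ upperRearrangements v,
      braidWords c p.1 p.2 ≡ gammaWords γ u v • Finsupp.single p.swap 1
        [SMOD Finsupp.supported k k (wordsAbove v u.length)] := by
    rintro ⟨u', v'⟩ ⟨⟨hu, -⟩, hv, hvv'⟩
    have hsub : wordsAbove v' u'.length ⊆ wordsAbove v u.length := fun p hp =>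
      ⟨hp.1.trans hv.length_eq, hvv'.trans_lt hp.2.1, hp.2.2.trans hu.length_eq⟩
    rw [← gammaWords_congr_perm γ hu hv]
    exact (hc.braidWords_smodEq hγ u' v').mono (Finsupp.supported_mono hsub)
  have hswap : gammaWords γ u v • f.mapDomain Prod.swap =
      Finsupp.linearCombination k (fun p => gammaWords γ u v • Finsupp.single p.swap 1) f := by
    simp [Finsupp.linearCombination_apply, Finsupp.mapDomain, Finsupp.smul_sum, mul_comm]
  rw [hswap]
  exact linearCombination_smodEq_of_mem_supported hf hwords

theorem braiding_bracket_triangular_general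
    (c : X → X → ((X × X) →₀ k))
    (γ : X → X → k) (hγ : ∀ x y : X, γ x y = c x y (y, x))
    (hctri : LeftTriangularMat c)
    (r : X → X → ((X × X) →₀ k))
    (hrdiag : IsDiagonalMat r)
    (br : List X → ((List X) →₀ k)) (hbr : IsBracketing r br)
    (u v : List X) :
    braidExt c (tensWords (br u) (br v))
        - gammaWords γ u v • tensWords (br v) (br u) ∈
      Submodule.span k {f : (List X × List X) →₀ k |
        ∃ z w : List X, z.length = v.length ∧ List.Lex (· < ·) v z ∧
          w.length = u.length ∧ f = Finsupp.single (z, w) 1} := by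
  have hsupp : tensWords (br u) (br v) ∈
      Finsupp.supported k k (upperRearrangements u ×ˢ upperRearrangements v) :=
    tensWords_mem_supported (hbr.mem_supported hrdiag u) (hbr.mem_supported hrdiag v)
  rw [span_single_wordsAbove, ← mapDomain_swap_tensWords (br u), ← SModEq.sub_mem]
  exact hctri.braidExt_smodEq hγ hsupp

/-- Let `(V, c)` be a finite-dimensional braided vector space, left triangular with
respect to `X` with diagonal coefficients `γ`, and let `r` be an admissible endomorphism
of `V ⊗ V` that is moreover diagonal with respect to `X`.  Then for all words `u, v`:
`c([u]_r ⊗ [v]_r) ∈ γ_{u,v} • ([v]_r ⊗ [u]_r) + k X^{l(v)}_{> v} ⊗ V^{⊗ l(u)}`. -/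
theorem braiding_bracket_triangular
    (c : X → X → ((X × X) →₀ k))
    (hcbij : Function.Bijective (extendMat c))
    (hcbraid : SatisfiesBraidEq c)
    (γ : X → X → k) (hγ : ∀ x y : X, γ x y = c x y (y, x))
    (hctri : LeftTriangularMat c)
    (r : X → X → ((X × X) →₀ k))
    (hrbraid : SatisfiesBraidEq r)
    (hrtri : LeftTriangularMat r)
    (hrdiag : ∀ (x y : X) (zw : X × X), r x y zw ≠ 0 → zw = (y, x))
    (br : List X → ((List X) →₀ k)) (hbr : IsBracketing r br)
    (u v : List X) :
    braidExt c (tensWords (br u) (br v))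
        - gammaWords γ u v • tensWords (br v) (br u) ∈
      Submodule.span k {f : (List X × List X) →₀ k |
        ∃ z w : List X, z.length = v.length ∧ List.Lex (· < ·) v z ∧
          w.length = u.length ∧ f = Finsupp.single (z, w) 1} := by
  exact braiding_bracket_triangular_general c γ hγ hctri r hrdiag br hbr u v
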